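/- Suppose the battery capacity is infinite, i.e. the Capacity constraints are omitted. If (p*, p*_H) is an optimal solution of the grid power minimization problem with strictly positive grid energy, Σ_{i=1}^N (p*_i − p*_{H,i}) > 0, then the Data constraint for k = 1 holds with equality: Σ_{i=1}^N (T_f/2)·log₂(1 + γ_i p*_i) = Σ_{i=1}^N B_i. -/

import Mathlib

/-- Rate of frame `i` under power `p i`. -/
noncomputable def rate (Tf : ℝ) (γ p : ℕ → ℝ) (i : ℕ) : ℝ :=
  Tf / 2 * Real.logb 2 (1 + γ i * p i)

/-- `0 ≤ p_{H,i} ≤ p_i` for all frames. -/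
def Alloc (N : ℕ) (p pH : ℕ → ℝ) : Prop :=
  ∀ i ∈ Finset.Icc 1 N, 0 ≤ pH i ∧ pH i ≤ p i

/-- Energy causality: `Σ_{i=1}^k T_f p_{H,i} ≤ Σ_{i=1}^k E_i` for `k = 1, …, N`. -/
def Causality (N : ℕ) (Tf : ℝ) (E pH : ℕ → ℝ) : Prop :=
  ∀ k ∈ Finset.Icc 1 N, ∑ i ∈ Finset.Icc 1 k, Tf * pH i ≤ ∑ i ∈ Finset.Icc 1 k, E i

/-- Data constraints: `Σ_{i=k}^N rate_i ≥ Σ_{i=k}^N B_i` for `k = 1, …, N`. -/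
def DataC (N : ℕ) (Tf : ℝ) (γ B p : ℕ → ℝ) : Prop :=
  ∀ k ∈ Finset.Icc 1 N, ∑ i ∈ Finset.Icc k N, B i ≤ ∑ i ∈ Finset.Icc k N, rate Tf γ p i

/-- Feasibility with infinite battery capacity (no capacity constraint). -/
def FeasibleInf (N : ℕ) (Tf : ℝ) (γ E B p pH : ℕ → ℝ) : Prop :=
  Alloc N p pH ∧ Causality N Tf E pH ∧ DataC N Tf γ B p

/-- Grid energy `Σ_{i=1}^N T_f (p_i − p_{H,i})` of an allocation. -/
def gridEnergy (N : ℕ) (Tf : ℝ) (p pH : ℕ → ℝ) : ℝ :=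
  ∑ i ∈ Finset.Icc 1 N, Tf * (p i - pH i)

/-- Optimality: a feasible allocation minimizing grid energy (infinite battery). -/
def OptimalInf (N : ℕ) (Tf : ℝ) (γ E B p pH : ℕ → ℝ) : Prop :=
  FeasibleInf N Tf γ E B p pH ∧
  ∀ q qH : ℕ → ℝ, FeasibleInf N Tf γ E B q qH →
    gridEnergy N Tf p pH ≤ gridEnergy N Tf q qH

/-! If the total rate had slack, lowering the power of the first active frame slightly would keep
every data constraint: later constraints do not see that frame, and earlier ones have the same total
rate as the first one and demand no more data. This saves grid energy if the first active frame
draws from the grid. If it does not, some later frame does, and deferring a little harvested energy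
to that frame is causal, costs nothing, and makes the first active frame draw from the grid. -/

open Function Topology

theorem exists_lt_of_sum_sub_pos {ι : Type*} {s : Finset ι} {f g : ι → ℝ}
    (hpos : 0 < ∑ i ∈ s, (f i - g i)) : ∃ i ∈ s, g i < f i :=
  Finset.exists_lt_of_sum_lt (by rwa [Finset.sum_sub_distrib, sub_pos] at hpos)

section Rate

variable {N k l i : ℕ} {Tf : ℝ} {γ p : ℕ → ℝ}

theorem rate_eq_zero (h : p i = 0) : rate Tf γ p i = 0 := by
  simp [rate, h]

theorem continuousAt_rate (h : 1 + γ i * p i ≠ 0) :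
    ContinuousAt (fun q : ℕ → ℝ => rate Tf γ q i) p := by
  have hsnr : ContinuousAt (fun q : ℕ → ℝ => 1 + γ i * q i) p :=
    ((continuousAt_apply i p).const_mul (γ i)).const_add 1
  exact ((hsnr.log h).div_const (Real.log 2)).const_mul (Tf / 2)

theorem sum_rate_Icc_eq_of_eq_zero (hlk : l ≤ k)
    (hzero : ∀ i ∈ Finset.Icc l N, i < k → p i = 0) :
    ∑ i ∈ Finset.Icc k N, rate Tf γ p i = ∑ i ∈ Finset.Icc l N, rate Tf γ p i := by
  refine Finset.sum_subset (Finset.Icc_subset_Icc_left hlk) fun i hi hik => ?_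
  have hlt : i < k := by
    simp only [Finset.mem_Icc] at hi hik
    omega
  exact rate_eq_zero (hzero i hi hlt)

end Rate

/-- Frame `j` is the first of the frames `1, …, N` with nonzero power: the frame whose power is
lowered in the exchange argument. -/
def IsFirstActive (N : ℕ) (p : ℕ → ℝ) (j : ℕ) : Prop :=
  IsLeast {i | i ∈ Finset.Icc 1 N ∧ p i ≠ 0} j

/-- The harvested power vector `pH` with an amount `d` moved from frame `j` to frame `m`. -/
def deferHarvest (pH : ℕ → ℝ) (j m : ℕ) (d : ℝ) : ℕ → ℝ :=
  pH - Pi.single j d + Pi.single m d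

section Perturbation

variable {N i j m : ℕ} {Tf d x : ℝ} {γ E B p pH : ℕ → ℝ}

theorem exists_isFirstActive (hi : i ∈ Finset.Icc 1 N) (hpi : p i ≠ 0) :
    ∃ j, IsFirstActive N p j :=
  ⟨_, Nat.sInf_mem ⟨i, hi, hpi⟩, fun _ => Nat.sInf_le⟩

theorem IsFirstActive.eq_zero_of_lt (hj : IsFirstActive N p j) (hi : i ∈ Finset.Icc 1 N)
    (hij : i < j) : p i = 0 :=
  by_contra fun hpi => hij.not_ge (hj.2 ⟨hi, hpi⟩)

theorem Alloc.nonneg (hA : Alloc N p pH) (hi : i ∈ Finset.Icc 1 N) : 0 ≤ p i :=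
  (hA i hi).1.trans (hA i hi).2

theorem Alloc.update (hA : Alloc N p pH) (hx : pH j ≤ x) : Alloc N (update p j x) pH := by
  intro i hi
  obtain rfl | hij := eq_or_ne i j
  · simpa only [update_self] using ⟨(hA i hi).1, hx⟩
  · simpa only [update_of_ne hij] using hA i hi

theorem alloc_deferHarvest (hA : Alloc N p pH) (hd : 0 ≤ d) (hdj : d ≤ pH j)
    (hdm : d ≤ p m - pH m) : Alloc N p (deferHarvest pH j m d) := by
  intro i hi
  obtain ⟨hnonneg, hle⟩ := hA i hi
  simp only [deferHarvest, Pi.add_apply, Pi.sub_apply, Pi.single_apply]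
  split_ifs <;> subst_vars <;> constructor <;> linarith

theorem sum_deferHarvest (s : Finset ℕ) :
    ∑ i ∈ s, deferHarvest pH j m d i
      = ∑ i ∈ s, pH i - (if j ∈ s then d else 0) + (if m ∈ s then d else 0) := by
  simp only [deferHarvest, Pi.add_apply, Pi.sub_apply, Finset.sum_add_distrib,
    Finset.sum_sub_distrib, Finset.sum_pi_single']

theorem causality_deferHarvest (hC : Causality N Tf E pH) (hTf : 0 ≤ Tf) (hj : 1 ≤ j)
    (hjm : j ≤ m) (hd : 0 ≤ d) : Causality N Tf E (deferHarvest pH j m d) := by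
  intro k hk
  have hsum : ∑ i ∈ Finset.Icc 1 k, deferHarvest pH j m d i
      ≤ ∑ i ∈ Finset.Icc 1 k, pH i := by
    have hmem : m ∈ Finset.Icc 1 k → j ∈ Finset.Icc 1 k := by
      simp only [Finset.mem_Icc]
      omega
    rw [sum_deferHarvest]
    split_ifs <;> first | linarith | tauto
  calc ∑ i ∈ Finset.Icc 1 k, Tf * deferHarvest pH j m d i
      ≤ ∑ i ∈ Finset.Icc 1 k, Tf * pH i := by
        simpa only [Finset.mul_sum] using mul_le_mul_of_nonneg_left hsum hTf
    _ ≤ ∑ i ∈ Finset.Icc 1 k, E i := hC k hk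

theorem gridEnergy_deferHarvest (hj : j ∈ Finset.Icc 1 N) (hm : m ∈ Finset.Icc 1 N) :
    gridEnergy N Tf p (deferHarvest pH j m d) = gridEnergy N Tf p pH := by
  simp only [gridEnergy, ← Finset.mul_sum, Finset.sum_sub_distrib, sum_deferHarvest, if_pos hj,
    if_pos hm, sub_add_cancel]

theorem gridEnergy_update_lt (hTf : 0 < Tf) (hj : j ∈ Finset.Icc 1 N) (hx : x < p j) :
    gridEnergy N Tf (update p j x) pH < gridEnergy N Tf p pH := by
  have hle : update p j x ≤ p := update_le_self_iff.2 hx.le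
  refine Finset.sum_lt_sum (fun i _ => ?_) ⟨j, hj, ?_⟩
  · have := hle i
    gcongr
  · rw [update_self]
    gcongr

theorem DataC.update_of_isFirstActive (hD : DataC N Tf γ B p)
    (hB : ∀ i ∈ Finset.Icc 1 N, 0 ≤ B i) (hj : IsFirstActive N p j)
    (htotal : ∑ i ∈ Finset.Icc 1 N, B i ≤ ∑ i ∈ Finset.Icc 1 N, rate Tf γ (update p j x) i) :
    DataC N Tf γ B (update p j x) := by
  intro k hk
  have h1k : 1 ≤ k := (Finset.mem_Icc.1 hk).1
  obtain hkj | hjk := le_or_gt k j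
  · have hzero : ∀ i ∈ Finset.Icc 1 N, i < k → update p j x i = 0 := fun i hi hik => by
      rw [update_of_ne (hik.trans_le hkj).ne, hj.eq_zero_of_lt hi (hik.trans_le hkj)]
    calc ∑ i ∈ Finset.Icc k N, B i
        ≤ ∑ i ∈ Finset.Icc 1 N, B i :=
          Finset.sum_le_sum_of_subset_of_nonneg (Finset.Icc_subset_Icc_left h1k)
            fun i hi _ => hB i hi
      _ ≤ ∑ i ∈ Finset.Icc 1 N, rate Tf γ (update p j x) i := htotal
      _ = ∑ i ∈ Finset.Icc k N, rate Tf γ (update p j x) i :=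
          (sum_rate_Icc_eq_of_eq_zero h1k hzero).symm
  · have hrate : ∀ i ∈ Finset.Icc k N, rate Tf γ (update p j x) i = rate Tf γ p i :=
      fun i hi => by
        rw [rate, rate, update_of_ne (hjk.trans_le (Finset.mem_Icc.1 hi).1).ne']
    rw [Finset.sum_congr rfl hrate]
    exact hD k hk

theorem eventually_lt_sum_rate_update {s : Finset ℕ} {c : ℝ} (j : ℕ)
    (hsnr : ∀ i ∈ s, 1 + γ i * p i ≠ 0) (hc : c < ∑ i ∈ s, rate Tf γ p i) :
    ∀ᶠ x in 𝓝 (p j), c < ∑ i ∈ s, rate Tf γ (update p j x) i := by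
  have hrate : ContinuousAt (fun q => ∑ i ∈ s, rate Tf γ q i) (update p j (p j)) := by
    rw [update_eq_self]
    exact tendsto_finsetSum s fun i hi => continuousAt_rate (hsnr i hi)
  have hupdate : ContinuousAt (fun x => update p j x) (p j) :=
    (continuous_const.update j continuous_id).continuousAt
  have hcomp : ContinuousAt (fun x => ∑ i ∈ s, rate Tf γ (update p j x) i) (p j) :=
    hrate.comp hupdate
  exact hcomp.eventually_const_lt (by simpa only [update_eq_self] using hc)

end Perturbation

section Optimality

variable {N j : ℕ} {Tf : ℝ} {γ E B p pH : ℕ → ℝ}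

theorem OptimalInf.exists_lt_of_isFirstActive (hopt : OptimalInf N Tf γ E B p pH) (hTf : 0 ≤ Tf)
    (hj : IsFirstActive N p j) (hpos : 0 < ∑ i ∈ Finset.Icc 1 N, (p i - pH i)) :
    ∃ qH, OptimalInf N Tf γ E B p qH ∧ qH j < p j := by
  obtain ⟨⟨hA, hC, hD⟩, hmin⟩ := hopt
  obtain ⟨hjN, hpj⟩ := hj.1
  obtain hlt | heq := (hA j hjN).2.lt_or_eq
  · exact ⟨pH, ⟨⟨hA, hC, hD⟩, hmin⟩, hlt⟩
  obtain ⟨m, hmN, hm⟩ := exists_lt_of_sum_sub_pos hpos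
  have hjm : j < m := by
    have hpm : p m ≠ 0 := ((hA m hmN).1.trans_lt hm).ne'
    refine (hj.2 ⟨hmN, hpm⟩).lt_of_ne ?_
    rintro rfl
    exact hm.ne heq
  have hpHj : 0 < pH j := heq ▸ (hA.nonneg hjN).lt_of_ne' hpj
  obtain ⟨d, hd, hdle⟩ := exists_between (lt_min hpHj (sub_pos.2 hm))
  obtain ⟨hdj, hdm⟩ := lt_min_iff.1 hdle
  refine ⟨deferHarvest pH j m d, ⟨⟨?_, ?_, hD⟩, fun q qH hq => ?_⟩, ?_⟩
  · exact alloc_deferHarvest hA hd.le hdj.le hdm.le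
  · exact causality_deferHarvest hC hTf (Finset.mem_Icc.1 hjN).1 hjm.le hd.le
  · exact (gridEnergy_deferHarvest hjN hmN).trans_le (hmin q qH hq)
  · simpa [deferHarvest, hjm.ne, heq] using hd

theorem OptimalInf.sum_rate_le_of_lt (hopt : OptimalInf N Tf γ E B p pH) (hTf : 0 < Tf)
    (hγ : ∀ i ∈ Finset.Icc 1 N, 0 ≤ γ i) (hB : ∀ i ∈ Finset.Icc 1 N, 0 ≤ B i)
    (hj : IsFirstActive N p j) (hlt : pH j < p j) :
    ∑ i ∈ Finset.Icc 1 N, rate Tf γ p i ≤ ∑ i ∈ Finset.Icc 1 N, B i := by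
  obtain ⟨⟨hA, hC, hD⟩, hmin⟩ := hopt
  by_contra! hslack
  have hsnr : ∀ i ∈ Finset.Icc 1 N, 1 + γ i * p i ≠ 0 := fun i hi => by
    have := mul_nonneg (hγ i hi) (hA.nonneg hi)
    positivity
  obtain ⟨x, htotal, hpHx, hxp⟩ :=
    ((eventually_lt_sum_rate_update j hsnr hslack).filter_mono nhdsWithin_le_nhds |>.and
      (Ioo_mem_nhdsLT hlt)).exists
  have hfeas : FeasibleInf N Tf γ E B (update p j x) pH :=
    ⟨hA.update hpHx.le, hC, hD.update_of_isFirstActive hB hj htotal.le⟩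
  exact (hmin _ _ hfeas).not_gt (gridEnergy_update_lt hTf hj.1.1 hxp)

end Optimality

theorem statement_12_general {N : ℕ} {Tf : ℝ} (hTf : 0 < Tf) {γ E B : ℕ → ℝ}
    (hγ : ∀ i ∈ Finset.Icc 1 N, 0 ≤ γ i) (hB : ∀ i ∈ Finset.Icc 1 N, 0 ≤ B i)
    {p pH : ℕ → ℝ} (hopt : OptimalInf N Tf γ E B p pH)
    (hpos : 0 < ∑ i ∈ Finset.Icc 1 N, (p i - pH i)) :
    ∑ i ∈ Finset.Icc 1 N, rate Tf γ p i = ∑ i ∈ Finset.Icc 1 N, B i := by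
  have ⟨hA, _, hD⟩ := hopt.1
  obtain ⟨i, hi, hgrid⟩ := exists_lt_of_sum_sub_pos hpos
  obtain ⟨j, hj⟩ : ∃ j, IsFirstActive N p j :=
    exists_isFirstActive hi ((hA i hi).1.trans_lt hgrid).ne'
  obtain ⟨qH, hopt', hlt⟩ := hopt.exists_lt_of_isFirstActive hTf.le hj hpos
  have h1N : 1 ∈ Finset.Icc 1 N := by
    simp only [Finset.mem_Icc] at hi ⊢
    omega
  exact le_antisymm (hopt'.sum_rate_le_of_lt hTf hγ hB hj hlt) (hD 1 h1N)

/-- with infinite battery capacity, if an optimal solution uses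
strictly positive grid energy, then the data constraint for `k = 1` holds with
equality: `Σ_{i=1}^N (T_f/2)·log₂(1 + γ_i p*_i) = Σ_{i=1}^N B_i`. -/
theorem statement_12
    (N : ℕ) (hN : 1 ≤ N) (Tf : ℝ) (hTf : 0 < Tf)
    (γ E B : ℕ → ℝ)
    (hγ : ∀ i ∈ Finset.Icc 1 N, 0 < γ i)
    (hE : ∀ i ∈ Finset.Icc 1 N, 0 ≤ E i)
    (hB : ∀ i ∈ Finset.Icc 1 N, 0 ≤ B i)
    (pstar pHstar : ℕ → ℝ)
    (hopt : OptimalInf N Tf γ E B pstar pHstar)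
    (hpos : 0 < ∑ i ∈ Finset.Icc 1 N, (pstar i - pHstar i)) :
    ∑ i ∈ Finset.Icc 1 N, rate Tf γ pstar i = ∑ i ∈ Finset.Icc 1 N, B i := by
  exact statement_12_general hTf (fun i hi => (hγ i hi).le) hB hopt hpos
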